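/- Let d ≥ 1, r ∈ ℝ and let V : ℝ^d → ℝ be continuous. Assume that for every integer n ≥ 1 there exists z_n ∈ ℝ^d such that |V(y) - r| ≤ 1/n for all y ∈ ℝ^d with |y - z_n| ≤ n. Then there exists a sequence (f_n) of smooth compactly supported functions on ℝ^d such that ‖f_n‖_{L²(ℝ^d)} = 1 for every n and ‖-Δ f_n + V f_n - r f_n‖_{L²(ℝ^d)} → 0 as n → ∞. -/

import Mathlib

open MeasureTheory Filter Topology

/-- The Laplacian of `f : ℝ^d → ℝ`, as the sum of second partial derivatives
in the coordinate directions. -/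
noncomputable def lap {d : ℕ} (f : EuclideanSpace ℝ (Fin d) → ℝ)
    (x : EuclideanSpace ℝ (Fin d)) : ℝ :=
  ∑ i, fderiv ℝ (fun y => fderiv ℝ f y (EuclideanSpace.single i 1)) x
      (EuclideanSpace.single i 1)

/-!
The dilation `g ↦ |s| ^ (d / 2) g (s (x - z))` preserves the `L²` norm and multiplies the Laplacian
by `s²`. Spreading a normalised bump supported in the unit ball over the ball of radius `n` around
`z n` thus gives a function `f` with `Δ f` of size `n⁻²` in `L²`, while `|V - r| ≤ 1 / n` on the
support of `f`.
-/

open Function Metric InnerProductSpace Laplacian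
open Module (finrank)
open scoped ContDiff ENNReal

theorem exists_contDiff_eLpNorm_eq_one {E : Type*} [NormedAddCommGroup E] [NormedSpace ℝ E]
    [FiniteDimensional ℝ E] [MeasurableSpace E] [BorelSpace E]
    (μ : Measure E) [IsFiniteMeasureOnCompacts μ] [μ.IsOpenPosMeasure] {p : ℝ≥0∞} (hp : p ≠ 0)
    (c : E) {R : ℝ} (hR : 0 < R) :
    ∃ ψ : E → ℝ, ContDiff ℝ ∞ ψ ∧ support ψ ⊆ ball c R ∧ eLpNorm ψ p μ = 1 := by
  let φ : ContDiffBump c := ⟨R / 2, R, half_pos hR, half_lt_self hR⟩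
  have hφ_top : eLpNorm φ p μ ≠ ⊤ :=
    (φ.continuous.memLp_of_hasCompactSupport φ.hasCompactSupport).eLpNorm_ne_top
  have hφ_zero : eLpNorm φ p μ ≠ 0 := by
    rw [Ne, eLpNorm_eq_zero_iff φ.continuous.aestronglyMeasurable hp,
      φ.continuous.ae_eq_iff_eq μ continuous_zero]
    intro h
    simpa [φ.one_of_mem_closedBall (mem_closedBall_self φ.rIn_pos.le)] using congrFun h c
  refine ⟨(eLpNorm φ p μ).toReal⁻¹ • ⇑φ, contDiff_const.smul φ.contDiff, ?_, ?_⟩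
  · exact (support_const_smul_subset _ _).trans φ.support_eq.subset
  · rw [eLpNorm_const_smul, enorm_inv (ENNReal.toReal_pos hφ_zero hφ_top).ne',
      Real.enorm_toReal hφ_top, ENNReal.inv_mul_cancel hφ_zero hφ_top]

theorem eLpNorm_mul_le_of_abs_le_on_support {α : Type*} [MeasurableSpace α] {μ : Measure α}
    {W f : α → ℝ} {ε : ℝ} (hW : ∀ x ∈ support f, |W x| ≤ ε) (p : ℝ≥0∞) :
    eLpNorm (fun x => W x * f x) p μ ≤ ENNReal.ofReal ε * eLpNorm f p μ := by
  refine eLpNorm_le_mul_eLpNorm_of_ae_le_mul (Eventually.of_forall fun x => ?_) p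
  rw [norm_mul, Real.norm_eq_abs (W x)]
  by_cases hx : f x = 0
  · simp [hx]
  · gcongr
    exact hW x hx

section LaplacianOperator

variable {E F : Type*} [NormedAddCommGroup E] [InnerProductSpace ℝ E] [FiniteDimensional ℝ E]
  [NormedAddCommGroup F] [NormedSpace ℝ F] {f : E → F}

theorem continuous_laplacian (hf : ContDiff ℝ 2 f) : Continuous (Δ f) := by
  rw [laplacian_eq_iteratedFDeriv_stdOrthonormalBasis]
  have := hf.continuous_iteratedFDeriv le_rfl
  fun_prop

theorem support_laplacian_subset : support (Δ f) ⊆ tsupport f := by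
  intro x hx
  by_contra hxf
  have h : iteratedFDeriv ℝ 2 f x = 0 :=
    notMem_support.1 fun h => hxf (support_iteratedFDeriv_subset 2 h)
  exact hx (by simp [laplacian_eq_iteratedFDeriv_stdOrthonormalBasis, h])

theorem memLp_laplacian [MeasurableSpace E] [BorelSpace E] {μ : Measure E}
    [IsFiniteMeasureOnCompacts μ] (hf : ContDiff ℝ 2 f) (hfc : HasCompactSupport f) (p : ℝ≥0∞) :
    MemLp (Δ f) p μ :=
  (continuous_laplacian hf).memLp_of_hasCompactSupport (hfc.mono' support_laplacian_subset)

theorem laplacian_comp_smul_sub (hf : ContDiff ℝ 2 f) (s : ℝ) (z : E) :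
    Δ (fun x => f (s • (x - z))) = fun x => s ^ 2 • Δ f (s • (x - z)) := by
  ext x
  simp only [laplacian_eq_iteratedFDeriv_stdOrthonormalBasis, Finset.smul_sum,
    iteratedFDeriv_comp_sub (f := fun y => f (s • y)) 2 z x,
    iteratedFDeriv_comp_const_smul s hf, smul_apply]

/-- The action `f ↦ -Δ f + V f` of the Schrödinger operator with potential `V`, pointwise and with
no domain attached: it is meaningful for `C²` functions. -/
noncomputable def schrodinger (V f : E → ℝ) : E → ℝ :=
  fun x => -Δ f x + V x * f x

theorem eLpNorm_schrodinger_sub_le [MeasurableSpace E] [BorelSpace E]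
    {μ : Measure E} {V f : E → ℝ} {r ε : ℝ} {p : ℝ≥0∞} (hp : 1 ≤ p)
    (hV : AEStronglyMeasurable V μ) (hf : ContDiff ℝ 2 f)
    (hVr : ∀ x ∈ support f, |V x - r| ≤ ε) :
    eLpNorm (fun x => schrodinger V f x - r * f x) p μ ≤
      eLpNorm (Δ f) p μ + ENNReal.ofReal ε * eLpNorm f p μ := by
  have hΔ : AEStronglyMeasurable (Δ f) μ := (continuous_laplacian hf).aestronglyMeasurable
  have hfm : AEStronglyMeasurable f μ := hf.continuous.aestronglyMeasurable
  calc eLpNorm (fun x => schrodinger V f x - r * f x) p μ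
      = eLpNorm (-Δ f + fun x => (V x - r) * f x) p μ := by
        congr 1 with x
        simp only [schrodinger, Pi.add_apply, Pi.neg_apply]
        ring
    _ ≤ eLpNorm (-Δ f) p μ + eLpNorm (fun x => (V x - r) * f x) p μ :=
        eLpNorm_add_le hΔ.neg ((hV.sub aestronglyMeasurable_const).mul hfm) hp
    _ ≤ eLpNorm (Δ f) p μ + ENNReal.ofReal ε * eLpNorm f p μ := by
        rw [eLpNorm_neg]
        gcongr
        exact eLpNorm_mul_le_of_abs_le_on_support hVr p

theorem lap_eq_laplacian {d : ℕ} {f : EuclideanSpace ℝ (Fin d) → ℝ} (hf : ContDiff ℝ 2 f) :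
    lap f = Δ f := by
  ext x
  have hf' : DifferentiableAt ℝ (fderiv ℝ f) x :=
    ((hf.fderiv_right (m := 1) le_rfl).differentiable one_ne_zero) x
  simp [lap, laplacian_eq_iteratedFDeriv_orthonormalBasis f (EuclideanSpace.basisFun (Fin d) ℝ),
    iteratedFDeriv_two_apply, fderiv_clm_apply hf' (differentiableAt_const _)]

end LaplacianOperator

section Dilation

variable {E F : Type*} [NormedAddCommGroup E] [NormedAddCommGroup F] [NormedSpace ℝ F]

/-- The dilation by `s` about `z`, carrying the unit ball around `0` to the ball of radius `|s|⁻¹`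
around `z`, with the factor that makes it an isometry of `L²` for `s ≠ 0`. -/
noncomputable def l2Dilation [NormedSpace ℝ E] (s : ℝ) (z : E) (g : E → F) : E → F :=
  fun x => √(|s| ^ finrank ℝ E) • g (s • (x - z))

theorem map_smul_sub_addHaar [NormedSpace ℝ E] [FiniteDimensional ℝ E] [MeasurableSpace E]
    [BorelSpace E] (μ : Measure E) [μ.IsAddHaarMeasure] {s : ℝ} (hs : s ≠ 0) (z : E) :
    μ.map (fun x => s • (x - z)) = ENNReal.ofReal (|s| ^ finrank ℝ E)⁻¹ • μ := by
  have hcomp : (fun x : E => s • (x - z)) = (s • ·) ∘ (· - z) := rfl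
  rw [hcomp, ← Measure.map_map (by fun_prop) (by fun_prop), map_sub_right_eq_self,
    Measure.map_addHaar_smul _ hs, abs_inv, abs_pow]

namespace l2Dilation

variable [NormedSpace ℝ E] {s : ℝ}

theorem contDiff {g : E → F} {n : ℕ∞ω} (hg : ContDiff ℝ n g) (s : ℝ) (z : E) :
    ContDiff ℝ n (l2Dilation s z g) := by
  unfold l2Dilation
  fun_prop

theorem support_subset {g : E → F} {R : ℝ} (hs : s ≠ 0) (z : E)
    (hg : support g ⊆ closedBall 0 R) :
    support (l2Dilation s z g) ⊆ closedBall z (R / |s|) := by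
  intro x hx
  have hgx : s • (x - z) ∈ support g := right_ne_zero_of_smul hx
  have hnorm : |s| * ‖x - z‖ ≤ R := by simpa [norm_smul] using hg hgx
  rwa [mem_closedBall_iff_norm, le_div_iff₀' (abs_pos.2 hs)]

theorem eLpNorm_eq [FiniteDimensional ℝ E] [MeasurableSpace E] [BorelSpace E] (μ : Measure E)
    [μ.IsAddHaarMeasure] (hs : s ≠ 0) (z : E) (g : E → F) :
    eLpNorm (l2Dilation s z g) 2 μ = eLpNorm g 2 μ := by
  have hemb : MeasurableEmbedding fun x : E => s • (x - z) :=
    ((Homeomorph.subRight z).trans (Homeomorph.smulOfNeZero s hs)).measurableEmbedding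
  have hpos : 0 < |s| ^ finrank ℝ E := by positivity
  calc eLpNorm (l2Dilation s z g) 2 μ
      = ‖√(|s| ^ finrank ℝ E)‖ₑ * eLpNorm g 2 (μ.map fun x => s • (x - z)) := by
        rw [hemb.eLpNorm_map_measure, ← eLpNorm_const_smul]
        rfl
    _ = ENNReal.ofReal (√(|s| ^ finrank ℝ E) * √(|s| ^ finrank ℝ E)⁻¹) * eLpNorm g 2 μ := by
        rw [map_smul_sub_addHaar μ hs, eLpNorm_smul_measure_of_ne_zero (by simpa using hpos),
          smul_eq_mul, ← mul_assoc, Real.enorm_of_nonneg (Real.sqrt_nonneg _),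
          ENNReal.ofReal_mul (Real.sqrt_nonneg _), Real.sqrt_eq_rpow (_)⁻¹,
          ENNReal.ofReal_rpow_of_pos (inv_pos.2 hpos)]
        simp
    _ = eLpNorm g 2 μ := by
        rw [Real.sqrt_inv, mul_inv_cancel₀ (Real.sqrt_pos.2 hpos).ne', ENNReal.ofReal_one, one_mul]

end l2Dilation

variable [InnerProductSpace ℝ E] [FiniteDimensional ℝ E]

theorem laplacian_l2Dilation {g : E → F} (hg : ContDiff ℝ 2 g) (s : ℝ) (z : E) :
    Δ (l2Dilation s z g) = s ^ 2 • l2Dilation s z (Δ g) := by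
  have hcomp : ContDiff ℝ 2 fun x => g (s • (x - z)) := by fun_prop
  ext x
  change Δ (√(|s| ^ finrank ℝ E) • fun x => g (s • (x - z))) x = _
  rw [laplacian_smul _ hcomp.contDiffAt, laplacian_comp_smul_sub hg]
  exact smul_comm _ _ _

theorem eLpNorm_schrodinger_l2Dilation_sub_le [MeasurableSpace E] [BorelSpace E]
    {μ : Measure E} [μ.IsAddHaarMeasure] {V g : E → ℝ} {r ε s R : ℝ} {z : E} (hs : s ≠ 0)
    (hV : AEStronglyMeasurable V μ) (hg : ContDiff ℝ 2 g) (hgR : support g ⊆ closedBall 0 R)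
    (hVr : ∀ x ∈ closedBall z (R / |s|), |V x - r| ≤ ε) :
    eLpNorm (fun x => schrodinger V (l2Dilation s z g) x - r * l2Dilation s z g x) 2 μ ≤
      ENNReal.ofReal (s ^ 2) * eLpNorm (Δ g) 2 μ + ENNReal.ofReal ε * eLpNorm g 2 μ := by
  refine (eLpNorm_schrodinger_sub_le one_le_two hV (l2Dilation.contDiff hg s z)
    fun x hx => hVr x (l2Dilation.support_subset hs z hgR hx)).trans_eq ?_
  rw [laplacian_l2Dilation hg, eLpNorm_const_smul, l2Dilation.eLpNorm_eq μ hs,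
    l2Dilation.eLpNorm_eq μ hs, Real.enorm_of_nonneg (sq_nonneg s)]

theorem weyl_sequence_for_flat_potential_general [MeasurableSpace E] [BorelSpace E]
    (μ : Measure E) [μ.IsAddHaarMeasure] {r : ℝ} {V : E → ℝ} (hV : AEStronglyMeasurable V μ)
    (hflat : ∀ n : ℕ, 1 ≤ n → ∃ z : E, ∀ y : E, ‖y - z‖ ≤ (n : ℝ) → |V y - r| ≤ 1 / (n : ℝ)) :
    ∃ f : ℕ → E → ℝ,
      (∀ n, ContDiff ℝ ∞ (f n) ∧ HasCompactSupport (f n) ∧ eLpNorm (f n) 2 μ = 1) ∧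
      Tendsto (fun n => eLpNorm (fun x => schrodinger V (f n) x - r * f n x) 2 μ)
        atTop (𝓝 0) := by
  obtain ⟨ψ, hψ, hψ_ball, hψ_norm⟩ :=
    exists_contDiff_eLpNorm_eq_one μ two_ne_zero (0 : E) one_pos
  have hψ_supp : support ψ ⊆ closedBall 0 1 := hψ_ball.trans ball_subset_closedBall
  have hψ_two : ContDiff ℝ 2 ψ := mod_cast contDiff_infty.1 hψ 2
  choose z hz using fun n : ℕ => hflat (n + 1) n.succ_pos
  let s : ℕ → ℝ := fun n => ((n + 1 : ℕ) : ℝ)⁻¹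
  have hs : ∀ n, s n ≠ 0 := fun n => by positivity
  have hs_lim : Tendsto s atTop (𝓝 0) :=
    tendsto_inv_atTop_nhds_zero_nat.comp (tendsto_add_atTop_nat 1)
  have hVr : ∀ n, ∀ x ∈ closedBall (z n) (1 / |s n|), |V x - r| ≤ s n := by
    intro n x hx
    rw [mem_closedBall_iff_norm, abs_inv, Nat.abs_cast, one_div, inv_inv] at hx
    exact (hz n x hx).trans_eq (one_div _)
  have hψ_compact : HasCompactSupport ψ :=
    .of_support_subset_isCompact (isCompact_closedBall _ _) hψ_supp
  have hΔψ : eLpNorm (Δ ψ) 2 μ ≠ ⊤ := (memLp_laplacian hψ_two hψ_compact 2).eLpNorm_ne_top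
  have hbound_lim : Tendsto (fun n => ENNReal.ofReal (s n ^ 2) * eLpNorm (Δ ψ) 2 μ
      + ENNReal.ofReal (s n) * eLpNorm ψ 2 μ) atTop (𝓝 0) := by
    simpa [hψ_norm] using (ENNReal.Tendsto.mul_const (ENNReal.tendsto_ofReal (hs_lim.pow 2))
      (.inr hΔψ)).add (ENNReal.tendsto_ofReal hs_lim)
  refine ⟨fun n => l2Dilation (s n) (z n) ψ, fun n => ⟨l2Dilation.contDiff hψ _ _, ?_, ?_⟩, ?_⟩
  · exact .of_support_subset_isCompact (isCompact_closedBall _ _)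
      (l2Dilation.support_subset (hs n) (z n) hψ_supp)
  · exact (l2Dilation.eLpNorm_eq μ (hs n) (z n) ψ).trans hψ_norm
  · exact tendsto_of_tendsto_of_tendsto_of_le_of_le tendsto_const_nhds hbound_lim
      (fun _ => zero_le) fun n =>
        eLpNorm_schrodinger_l2Dilation_sub_le (hs n) hV hψ_two hψ_supp (hVr n)

end Dilation

theorem weyl_sequence_for_flat_potential
    (d : ℕ) (hd : 1 ≤ d) (r : ℝ)
    (V : EuclideanSpace ℝ (Fin d) → ℝ) (hV : Continuous V)
    (hflat : ∀ n : ℕ, 1 ≤ n → ∃ z : EuclideanSpace ℝ (Fin d),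
      ∀ y : EuclideanSpace ℝ (Fin d), ‖y - z‖ ≤ (n : ℝ) → |V y - r| ≤ 1 / (n : ℝ)) :
    ∃ f : ℕ → EuclideanSpace ℝ (Fin d) → ℝ,
      (∀ n, ContDiff ℝ (⊤ : ℕ∞) (f n) ∧ HasCompactSupport (f n) ∧
        eLpNorm (f n) 2 volume = 1) ∧
      Tendsto (fun n => eLpNorm
          (fun x => -lap (f n) x + V x * f n x - r * f n x) 2 volume)
        atTop (𝓝 0) := by
  obtain ⟨f, hf, hlim⟩ :=
    weyl_sequence_for_flat_potential_general volume hV.aestronglyMeasurable hflat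
  have hlap : ∀ n, lap (f n) = Δ (f n) := fun n =>
    lap_eq_laplacian (mod_cast contDiff_infty.1 (hf n).1 2)
  exact ⟨f, hf, by simpa only [schrodinger, hlap] using hlim⟩
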